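/- Let n ≥ 3 be a finite natural number and let 𝔄 = ⟨A, +, −, c_i, s_ij, p_ij⟩_{i,j<n} be a csp-algebra. Then 𝔄 is isomorphic to a subalgebra of the full csp-set algebra on some base set V if and only if 𝔄 satisfies the FPA_n axioms and its reduct ⟨A, +, −, c_i, s_ij⟩_{i,j<n} is isomorphic to a subalgebra of the full cs-set algebra on some base set U. -/

import Mathlib

/-- Cylindrification: `C_i(R) = {s : s(i/u) ∈ R for some u}`. -/
def cyl {n : ℕ} {U : Type} (i : Fin n) (R : Set (Fin n → U)) : Set (Fin n → U) :=
  {s | ∃ u : U, Function.update s i u ∈ R}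

/-- Substitution: `S_ij(R) = {s : s(i/s(j)) ∈ R}`. -/
def subst {n : ℕ} {U : Type} (i j : Fin n) (R : Set (Fin n → U)) : Set (Fin n → U) :=
  {s | Function.update s i (s j) ∈ R}

/-- Transposition: `P_ij(R) = {s : s(i/s(j))(j/s(i)) ∈ R}`. -/
def transp {n : ℕ} {U : Type} (i j : Fin n) (R : Set (Fin n → U)) : Set (Fin n → U) :=
  {s | Function.update (Function.update s i (s j)) j (s i) ∈ R}

/-- `⟨A, +, −, c_i, s_ij, p_ij⟩` is isomorphic to a subalgebra of the full csp-set
algebra on some base set. -/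
def RepCspSet {n : ℕ} {A : Type} [BooleanAlgebra A]
    (c : Fin n → A → A) (s : Fin n → Fin n → A → A) (p : Fin n → Fin n → A → A) : Prop :=
  ∃ (V : Type) (f : A → Set (Fin n → V)),
    Function.Injective f ∧
    (∀ x y : A, f (x ⊔ y) = f x ⊔ f y) ∧
    (∀ x : A, f xᶜ = (f x)ᶜ) ∧
    (∀ (i : Fin n) (x : A), f (c i x) = cyl i (f x)) ∧
    (∀ (i j : Fin n) (x : A), f (s i j x) = subst i j (f x)) ∧
    (∀ (i j : Fin n) (x : A), f (p i j x) = transp i j (f x))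

/-- `⟨A, +, −, c_i, s_ij⟩` is isomorphic to a subalgebra of the full cs-set algebra
on some base set. -/
def RepCsSet {n : ℕ} {A : Type} [BooleanAlgebra A]
    (c : Fin n → A → A) (s : Fin n → Fin n → A → A) : Prop :=
  ∃ (U : Type) (f : A → Set (Fin n → U)),
    Function.Injective f ∧
    (∀ x y : A, f (x ⊔ y) = f x ⊔ f y) ∧
    (∀ x : A, f xᶜ = (f x)ᶜ) ∧
    (∀ (i : Fin n) (x : A), f (c i x) = cyl i (f x)) ∧
    (∀ (i j : Fin n) (x : A), f (s i j x) = subst i j (f x))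

open Equiv in
/-- A family of involutions indexed by pairs and satisfying the conjugation relations of
transpositions extends to a homomorphism defined on the whole symmetric group. -/
theorem exists_permHom_of_transposition_relations {ι G : Type*} [Fintype ι] [DecidableEq ι]
    [Group G] (q : ι → ι → G) (hdiag : ∀ i, q i i = 1) (hsymm : ∀ i j, q i j = q j i)
    (hinv : ∀ i j, q i j * q i j = 1)
    (hconj : ∀ i j k, i ≠ j → i ≠ k → j ≠ k → q i j * q i k = q j k * q i j) :
    ∃ ρ : Perm ι →* G, ∀ i j, ρ (swap i j) = q i j := by
  classical
  have hcomm : ∀ i j k l, i ≠ j → k ≠ l → i ≠ k → i ≠ l → j ≠ k → j ≠ l →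
      q i j * q k l = q k l * q i j := by
    intro i j k l hij hkl hik hil hjk hjl
    have hsplit : ∀ m, m ≠ k → m ≠ l → q k l = q m k * q m l * q m k := by
      intro m hmk hml
      rw [hconj m k l hmk hml hkl, mul_assoc, hinv, mul_one]
    calc q i j * q k l = q i j * q i k * q i l * q i k := by
          rw [hsplit i hik hil]; simp only [mul_assoc]
      _ = q j k * (q i j * q i l) * q i k := by
          rw [hconj i j k hij hik hjk]; simp only [mul_assoc]
      _ = q j k * q j l * (q i j * q i k) := by
          rw [hconj i j l hij hil hjl]; simp only [mul_assoc]
      _ = q j k * q j l * q j k * q i j := by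
          rw [hconj i j k hij hik hjk]; simp only [mul_assoc]
      _ = q k l * q i j := by rw [← hsplit j hjk hjl]
  have hmove : ∀ i j k l, q i j * q k l = q (swap i j k) (swap i j l) * q i j := by
    intro i j k l
    rcases eq_or_ne i j with rfl | hij
    · simp [hdiag]
    rcases eq_or_ne k l with rfl | hkl
    · simp [hdiag]
    rcases eq_or_ne k i with rfl | hki
    · rw [swap_apply_left]
      rcases eq_or_ne l j with rfl | hlj
      · rw [swap_apply_right, hsymm l k]
      · rw [swap_apply_of_ne_of_ne hkl.symm hlj, hconj k j l hij hkl hlj.symm]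
    rcases eq_or_ne k j with rfl | hkj
    · rw [swap_apply_right]
      rcases eq_or_ne l i with rfl | hli
      · rw [swap_apply_left, hsymm k l]
      · rw [swap_apply_of_ne_of_ne hli hkl.symm, hsymm i k,
          hconj k i l hij.symm hkl hli.symm]
    rw [swap_apply_of_ne_of_ne hki hkj]
    rcases eq_or_ne l i with rfl | hli
    · rw [swap_apply_left, hsymm k l, hconj l j k hij hki.symm hkj.symm, hsymm j k]
    rcases eq_or_ne l j with rfl | hlj
    · rw [swap_apply_right, hsymm k l, hsymm i l, hconj l i k hij.symm hkj.symm hki.symm,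
        hsymm i k]
    rw [swap_apply_of_ne_of_ne hli hlj]
    exact hcomm i j k l hij hkl hki.symm hli.symm hkj.symm hlj.symm
  let Q : ι → ι → Perm ι × G := fun i j => (swap i j, q i j)
  have hQmove : ∀ i j k l, Q i j * Q k l = Q (swap i j k) (swap i j l) * Q i j := by
    intro i j k l
    refine Prod.ext ?_ (hmove i j k l)
    change swap i j * swap k l = swap (swap i j k) (swap i j l) * swap i j
    exact mul_swap_eq_swap_mul (swap i j) k l
  have hQinv : ∀ i j, (Q i j)⁻¹ = Q i j := by
    intro i j
    refine inv_eq_of_mul_eq_one_left (Prod.ext ?_ (hinv i j))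
    simp [Q]
  have hQdiag : ∀ i, Q i i = 1 := fun i => Prod.ext (swap_self i) (hdiag i)
  let H : Finset ι → Subgroup (Perm ι × G) := fun S =>
    Subgroup.closure {z | ∃ i ∈ S, ∃ j ∈ S, z = Q i j}
  have hmem : ∀ (S : Finset ι) {i j}, i ∈ S → j ∈ S → Q i j ∈ H S := fun S i j hi hj =>
    Subgroup.subset_closure ⟨i, hi, j, hj, rfl⟩
  have hfix : ∀ (S : Finset ι) (a : ι), a ∉ S → ∀ z ∈ H S, z.1 a = a := by
    intro S a ha z hz
    induction hz using Subgroup.closure_induction with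
    | mem z hz =>
      obtain ⟨i, hi, j, hj, rfl⟩ := hz
      exact swap_apply_of_ne_of_ne (fun h => ha (h ▸ hi)) (fun h => ha (h ▸ hj))
    | one => rfl
    | mul y z _ _ hy hz => rw [Prod.fst_mul, Perm.mul_apply, hz, hy]
    | inv z _ hz =>
      rw [Prod.fst_inv, Perm.inv_eq_iff_eq, hz]
  have hcoset : ∀ (S : Finset ι) (a : ι), a ∉ S → ∀ z ∈ H (insert a S),
      ∃ b ∈ insert a S, ∃ h ∈ H S, z = Q a b * h := by
    intro S a ha z hz
    have hstep : ∀ i ∈ insert a S, ∀ j ∈ insert a S, ∀ z,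
        (∃ b ∈ insert a S, ∃ h ∈ H S, z = Q a b * h) →
        ∃ b ∈ insert a S, ∃ h ∈ H S, Q i j * z = Q a b * h := by
      have hfirst : ∀ c ∈ insert a S, ∀ z, (∃ b ∈ insert a S, ∃ h ∈ H S, z = Q a b * h) →
          ∃ b ∈ insert a S, ∃ h ∈ H S, Q a c * z = Q a b * h := by
        rintro c hc z ⟨b, hb, h, hh, rfl⟩
        rcases eq_or_ne c a with rfl | hca
        · exact ⟨b, hb, h, hh, by rw [hQdiag, one_mul]⟩
        rcases eq_or_ne b a with rfl | hba
        · exact ⟨c, hc, h, hh, by rw [hQdiag, one_mul]⟩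
        rcases eq_or_ne b c with rfl | hbc
        · refine ⟨a, Finset.mem_insert_self a S, h, hh, ?_⟩
          rw [hQdiag, ← mul_assoc]
          nth_rewrite 1 [← hQinv]
          rw [inv_mul_cancel]
        · have hbS := Finset.mem_of_mem_insert_of_ne hb hba
          have hcS := Finset.mem_of_mem_insert_of_ne hc hca
          refine ⟨b, hb, Q b c * h, mul_mem (hmem S hbS hcS) hh, ?_⟩
          rw [← mul_assoc, ← mul_assoc, hQmove a b b c, swap_apply_right,
            swap_apply_of_ne_of_ne hca hbc.symm]
      rintro i hi j hj z hz
      rcases eq_or_ne i a with rfl | hia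
      · exact hfirst j hj z hz
      rcases eq_or_ne j a with rfl | hja
      · have : Q i j = Q j i := Prod.ext (swap_comm i j) (hsymm i j)
        rw [this]
        exact hfirst i hi z hz
      obtain ⟨b, hb, h, hh, rfl⟩ := hz
      have hiS := Finset.mem_of_mem_insert_of_ne hi hia
      have hjS := Finset.mem_of_mem_insert_of_ne hj hja
      refine ⟨swap i j b, ?_, Q i j * h, mul_mem (hmem S hiS hjS) hh, ?_⟩
      · rw [swap_apply_def]
        split_ifs <;> assumption
      · rw [← mul_assoc, hQmove i j a b, swap_apply_of_ne_of_ne hia.symm hja.symm, mul_assoc]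
    induction hz using Subgroup.closure_induction_left with
    | one => exact ⟨a, Finset.mem_insert_self a S, 1, one_mem _, by rw [hQdiag, one_mul]⟩
    | mul_left y hy z _ hz =>
      obtain ⟨i, hi, j, hj, rfl⟩ := hy
      exact hstep i hi j hj z hz
    | inv_mul_cancel y hy z _ hz =>
      obtain ⟨i, hi, j, hj, rfl⟩ := hy
      rw [hQinv]
      exact hstep i hi j hj z hz
  have hker : ∀ (S : Finset ι), ∀ z ∈ H S, z.1 = 1 → z = 1 := by
    intro S
    induction S using Finset.induction_on with
    | empty =>
      intro z hz _
      have : H ∅ = ⊥ := by simp [H]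
      rwa [this, Subgroup.mem_bot] at hz
    | insert a S ha ih =>
      intro z hz hz1
      obtain ⟨b, hb, h, hh, rfl⟩ := hcoset S a ha z hz
      have hab : b = a := by
        have := DFunLike.congr_fun hz1 a
        rw [Prod.fst_mul, Perm.mul_apply, hfix S a ha h hh] at this
        simpa [Q] using this
      subst hab
      rw [hQdiag, one_mul] at hz1 ⊢
      exact ih h hh hz1
  let π : H Finset.univ →* Perm ι := (MonoidHom.fst _ _).comp (H Finset.univ).subtype
  have hπ : Function.Bijective π := by
    constructor
    · rw [injective_iff_map_eq_one]
      rintro ⟨z, hz⟩ h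
      exact Subtype.ext (hker _ z hz h)
    · intro σ
      induction σ using Perm.swap_induction_on with
      | one => exact ⟨1, map_one π⟩
      | swap_mul σ i j _ ih =>
        obtain ⟨z, hz⟩ := ih
        exact ⟨⟨Q i j, hmem _ (Finset.mem_univ i) (Finset.mem_univ j)⟩ * z, by
          rw [map_mul, hz]; rfl⟩
  let e := MulEquiv.ofBijective π hπ
  refine ⟨((MonoidHom.snd _ _).comp (H Finset.univ).subtype).comp e.symm.toMonoidHom, ?_⟩
  intro i j
  have : e.symm (swap i j) = ⟨Q i j, hmem _ (Finset.mem_univ i) (Finset.mem_univ j)⟩ := by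
    rw [MulEquiv.symm_apply_eq]; rfl
  change (e.symm (swap i j)).1.2 = q i j
  rw [this]

/-- The base set obtained from `U` by freely adjoining, for every tuple, every coordinate and
every `u : U`, a new copy of `u` serving as a witness at that coordinate of that tuple. -/
inductive WitnessTree (n : ℕ) (U : Type) : Type
  | base (u : U) : WitnessTree n U
  | witness (t : Fin n → WitnessTree n U) (i : Fin n) (u : U) : WitnessTree n U

namespace WitnessTree

variable {n : ℕ} {U : Type}

/-- The element of `U` of which a tree is a copy. -/
def label : WitnessTree n U → U
  | base u => u
  | witness _ _ u => u

/-- The height of a tree. -/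
def height : WitnessTree n U → ℕ
  | base _ => 0
  | witness t _ _ => (Finset.univ.sup fun j => height (t j)) + 1

theorem height_lt_witness (t : Fin n → WitnessTree n U) (i j : Fin n) (u : U) :
    (t j).height < (witness t i u).height := by
  rw [height, Nat.lt_succ_iff]
  exact Finset.le_sup (f := fun j => (t j).height) (Finset.mem_univ j)

/-- A tuple is witnessed if one coordinate was adjoined as a witness for the other ones. -/
def Witnessed (t : Fin n → WitnessTree n U) : Prop :=
  ∃ (i : Fin n) (t' : Fin n → WitnessTree n U) (u : U),
    t = Function.update t' i (witness t' i u)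

theorem Witnessed.comp_perm_eq {t : Fin n → WitnessTree n U} {σ : Equiv.Perm (Fin n)}
    (ht : Witnessed t) (hσ : Witnessed (t ∘ σ)) : t ∘ σ = t := by
  obtain ⟨i, t₁, u, h₁⟩ := ht
  obtain ⟨j, t₂, v, h₂⟩ := hσ
  have hi : t i = witness t₁ i u := by rw [h₁, Function.update_self]
  have hj : t (σ j) = witness t₂ j v := by
    rw [← Function.comp_apply (f := t), h₂, Function.update_self]
  have hi' : ∀ k, k ≠ i → t k = t₁ k := fun k hk => by rw [h₁, Function.update_of_ne hk]
  have hj' : ∀ k, k ≠ j → t (σ k) = t₂ k := fun k hk => by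
    rw [← Function.comp_apply (f := t), h₂, Function.update_of_ne hk]
  by_cases hij : σ j = i
  · rw [hij, hi] at hj
    injection hj with e₁ e₂ e₃
    rw [h₂, h₁, e₁, e₂, e₃]
  · exfalso
    have hne : σ.symm i ≠ j := fun h => hij (by rw [← h, Equiv.apply_symm_apply])
    have l₁ := height_lt_witness t₁ i (σ j) u
    have l₂ := height_lt_witness t₂ j (σ.symm i) v
    rw [← hi' _ hij, ← hi] at l₁
    rw [← hj' _ hne, ← hj, Equiv.apply_symm_apply] at l₂
    exact lt_asymm l₁ l₂

theorem label_comp_update_witness (t : Fin n → WitnessTree n U) (i : Fin n) (u : U) :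
    label ∘ Function.update t i (witness t i u) = Function.update (label ∘ t) i u := by
  rw [Function.comp_update]; rfl

/-- Orbits of tuples under reordering have representatives which are witnessed if possible. -/
theorem exists_orbit_representative :
    ∃ r : (Fin n → WitnessTree n U) → (Fin n → WitnessTree n U),
      (∀ t, ∃ σ : Equiv.Perm (Fin n), t = r t ∘ σ) ∧
      (∀ t (σ : Equiv.Perm (Fin n)), r (t ∘ σ) = r t) ∧
      ∀ t, Witnessed t → r t = t := by
  classical
  let O : (Fin n → WitnessTree n U) → Set (Fin n → WitnessTree n U) := fun t =>
    Set.range fun σ : Equiv.Perm (Fin n) => t ∘ σ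
  have hO : ∀ t (σ : Equiv.Perm (Fin n)), O (t ∘ σ) = O t := by
    intro t σ
    ext w
    constructor
    · rintro ⟨τ, rfl⟩
      exact ⟨σ * τ, rfl⟩
    · rintro ⟨τ, rfl⟩
      exact ⟨σ⁻¹ * τ, by funext k; simp⟩
  have hpick : ∀ S : Set (Fin n → WitnessTree n U), S.Nonempty →
      ∃ w ∈ S, Witnessed w ∨ ∀ w' ∈ S, ¬ Witnessed w' := by
    rintro S ⟨w, hw⟩
    by_cases h : ∃ w' ∈ S, Witnessed w'
    · obtain ⟨w', hw', hg⟩ := h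
      exact ⟨w', hw', Or.inl hg⟩
    · push Not at h
      exact ⟨w, hw, Or.inr h⟩
  choose pick hmem hgood using hpick
  have hself : ∀ t, t ∈ O t := fun t => ⟨1, rfl⟩
  have hne : ∀ t, (O t).Nonempty := fun t => ⟨t, hself t⟩
  have hcongr : ∀ S T hS hT, S = T → pick S hS = pick T hT := by
    rintro S _ hS hT rfl; rfl
  refine ⟨fun t => pick (O t) (hne t), fun t => ?_, fun t σ => ?_, fun t ht => ?_⟩
  · obtain ⟨σ, hσ⟩ := hmem (O t) (hne t)
    exact ⟨σ⁻¹, by simp only [← hσ]; funext k; simp⟩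
  · exact hcongr _ _ _ _ (hO t σ)
  · obtain ⟨σ, hσ⟩ := hmem (O t) (hne t)
    rcases hgood (O t) (hne t) with h | h
    · rw [← hσ] at h
      change pick (O t) (hne t) = t
      rw [← hσ]
      exact ht.comp_perm_eq h
    · exact absurd ht (h t (hself t))

end WitnessTree

theorem update_update_eq_comp_swap {ι α : Type*} [DecidableEq ι] (w : ι → α) (i j : ι) :
    Function.update (Function.update w i (w j)) j (w i) = w ∘ Equiv.swap i j := by
  funext k
  simp only [Function.update_apply, Function.comp_apply, Equiv.swap_apply_def]
  split_ifs <;> simp_all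

theorem mem_transp {n : ℕ} {U : Type} {i j : Fin n} {R : Set (Fin n → U)} {w : Fin n → U} :
    w ∈ transp i j R ↔ w ∘ Equiv.swap i j ∈ R := by
  rw [← update_update_eq_comp_swap]; rfl

theorem mem_cyl_congr {n : ℕ} {U : Type} {i : Fin n} {R : Set (Fin n → U)} {w w' : Fin n → U}
    (h : ∀ k, k ≠ i → w k = w' k) : w ∈ cyl i R ↔ w' ∈ cyl i R := by
  have : ∀ u, Function.update w i u = Function.update w' i u := by
    intro u
    funext k
    by_cases hk : k = i
    · subst hk; simp
    · simp [hk, h k hk]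
  simp only [cyl, Set.mem_ofPred_eq, this]

section Representation

variable {n : ℕ} {A : Type} {c : Fin n → A → A}
  {s p : Fin n → Fin n → A → A} {U : Type} {f : A → Set (Fin n → U)}

/-- On cylindrified elements a transposition operation is a composition of substitutions, hence it
is represented correctly by every representation of the reduct. -/
theorem transposition_of_cylinder
    (hp0 : ∀ i x, p i i x = x) (hpsymm : ∀ i j x, p i j x = p j i x)
    (hsc : ∀ i j x, s i j (c i x) = c i x) (hcs : ∀ i j x, i ≠ j → c i (s i j x) = s i j x)
    (hpp : ∀ i j x, p i j (p i j x) = x)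
    (hppp : ∀ i j k x, i ≠ j → i ≠ k → j ≠ k → p i j (p i k x) = p j k (p i j x))
    (hps : ∀ i j x, p i j (s j i x) = s i j x)
    (hfc : ∀ i x, f (c i x) = cyl i (f x)) (hfs : ∀ i j x, f (s i j x) = subst i j (f x))
    (i j m : Fin n) (x : A) :
    (∃ m' y, p i j (c m x) = c m' y) ∧
      ∀ w, w ∈ f (p i j (c m x)) ↔ w ∘ Equiv.swap i j ∈ f (c m x) := by
  have hsub : ∀ a b y, p a b (c a y) = s b a (c a y) := by
    intro a b y
    rw [← hsc a b y, hpsymm, hps, hsc]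
  have hpair : ∀ a b, a ≠ b → (∃ m' y, p a b (c a x) = c m' y) ∧
      ∀ w, w ∈ f (p a b (c a x)) ↔ w ∘ Equiv.swap a b ∈ f (c a x) := by
    intro a b hab
    rw [hsub]
    refine ⟨⟨b, s b a (c a x), (hcs b a _ hab.symm).symm⟩, fun w => ?_⟩
    rw [hfs, hfc]
    refine mem_cyl_congr fun k hk => ?_
    simp only [Function.update_apply, Function.comp_apply, Equiv.swap_apply_def]
    split_ifs <;> simp_all
  rcases eq_or_ne i j with rfl | hij
  · exact ⟨⟨m, x, hp0 i _⟩, fun w => by simp [hp0]⟩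
  rcases eq_or_ne m i with rfl | hmi
  · exact hpair m j hij
  rcases eq_or_ne m j with rfl | hmj
  · rw [hpsymm, Equiv.swap_comm]
    exact hpair m i hij.symm
  have hword : p i j (c m x) = s m j (s j i (s i m (c m x))) := by
    calc p i j (c m x) = p i j (p i m (p i m (c m x))) := by rw [hpp]
      _ = p j m (p i j (p i m (c m x))) := hppp i j m _ hij hmi.symm hmj.symm
      _ = p j m (p i j (s i m (c m x))) := by rw [hpsymm i m, hsub]
      _ = p j m (s j i (s i m (c m x))) := by
          rw [← hcs i m (c m x) hmi.symm, hsub]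
      _ = s m j (s j i (s i m (c m x))) := by
          rw [← hcs j i (s i m (c m x)) hij.symm, hsub]
  rw [hword]
  refine ⟨⟨m, _, (hcs m j _ hmj).symm⟩, fun w => ?_⟩
  simp only [hfs, hfc]
  refine mem_cyl_congr fun k hk => ?_
  simp only [Function.update_apply, Function.comp_apply, Equiv.swap_apply_def]
  split_ifs <;> simp_all

/-- If a Boolean ultrafilter `F` agrees on all cylindrified elements with the type of a
non-injective tuple `t`, then `F` is the type of `t`. -/
theorem mem_iff_of_cylinder_agree [BooleanAlgebra A] (hn : 3 ≤ n)
    (hc : ∀ i x, x ≤ c i x) (hcs : ∀ i j x, i ≠ j → c i (s i j x) = s i j x)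
    (hfsup : ∀ x y, f (x ⊔ y) = f x ⊔ f y) (hfcompl : ∀ x, f xᶜ = (f x)ᶜ)
    (hfc : ∀ i x, f (c i x) = cyl i (f x)) (hfs : ∀ i j x, f (s i j x) = subst i j (f x))
    {F : A → Prop} (hFsup : ∀ x y, F (x ⊔ y) ↔ F x ∨ F y) (hFcompl : ∀ x, F xᶜ ↔ ¬ F x)
    {t : Fin n → U} (ht : ¬ Function.Injective t)
    (hF : ∀ m x, F (c m x) ↔ t ∈ f (c m x)) (x : A) : F x ↔ t ∈ f x := by
  obtain ⟨k, l, hkl, hne⟩ : ∃ k l, t k = t l ∧ k ≠ l := by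
    simpa [Function.Injective] using ht
  obtain ⟨m, hmk, hml⟩ : ∃ m : Fin n, m ≠ k ∧ m ≠ l := by
    have : ({k, l} : Finset (Fin n)).card < (Finset.univ : Finset (Fin n)).card := by
      rw [Finset.card_univ, Fintype.card_fin]
      exact lt_of_le_of_lt Finset.card_le_two hn
    obtain ⟨m, -, hm⟩ := Finset.exists_mem_notMem_of_card_lt_card this
    simp only [Finset.mem_insert, Finset.mem_singleton, not_or] at hm
    exact ⟨m, hm⟩
  have hdiag : ∀ w : Fin n → U, w k = w l → ∀ y, w ∈ f (s k l y) ↔ w ∈ f y := by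
    intro w hw y
    rw [hfs]
    change Function.update w k (w l) ∈ f y ↔ _
    rw [← hw, Function.update_eq_self]
  have hmono : ∀ y z, y ≤ z → F y → F z := by
    intro y z hyz hy
    rw [← sup_eq_right.mpr hyz, hFsup]
    exact Or.inl hy
  have hforward : ∀ x, F x → t ∈ f x := by
    intro x hx
    by_contra hxt
    have hs : ¬ F (s k l x) := by
      rw [← hcs k l x hne, hF, hcs k l x hne, hdiag t hkl]
      exact hxt
    have hy : F (xᶜ ⊔ s k l x)ᶜ := by
      rw [hFcompl, hFsup, hFcompl]
      tauto
    have hcy := (hF m _).1 (hmono _ _ (hc m _) hy)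
    rw [hfc] at hcy
    obtain ⟨u, hu⟩ := hcy
    rw [hfcompl, hfsup, hfcompl] at hu
    have hw : Function.update t m u k = Function.update t m u l := by
      rw [Function.update_of_ne hmk.symm, Function.update_of_ne hml.symm, hkl]
    have := hdiag _ hw x
    simp only [Set.sup_eq_union, Set.mem_compl_iff, Set.mem_union, not_or, not_not] at hu
    exact hu.2 (this.2 hu.1)
  refine ⟨hforward x, fun hx => ?_⟩
  by_contra h
  have := hforward xᶜ ((hFcompl x).2 h)
  rw [hfcompl] at this
  exact this hx

end Representation

open WitnessTree in
/-- A representation of the substitution-cylindrification reduct of an algebra satisfying the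
`FPA_n` axioms can be turned into a representation of the whole algebra. -/
theorem repCspSet_of_repCsSet {n : ℕ} (hn : 3 ≤ n) {A : Type} [BooleanAlgebra A]
    {c : Fin n → A → A} {s p : Fin n → Fin n → A → A}
    (hs0 : ∀ i x, s i i x = x) (hp0 : ∀ i x, p i i x = x) (hpsymm : ∀ i j x, p i j x = p j i x)
    (hc : ∀ i x, x ≤ c i x)
    (hsc : ∀ i j x, s i j (c i x) = c i x) (hcs : ∀ i j x, i ≠ j → c i (s i j x) = s i j x)
    (hpsup : ∀ i j x y, p i j (x ⊔ y) = p i j x ⊔ p i j y)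
    (hpcompl : ∀ i j x, p i j xᶜ = (p i j x)ᶜ)
    (hpp : ∀ i j x, p i j (p i j x) = x)
    (hppp : ∀ i j k x, i ≠ j → i ≠ k → j ≠ k → p i j (p i k x) = p j k (p i j x))
    (hps : ∀ i j x, p i j (s j i x) = s i j x) (h : RepCsSet c s) : RepCspSet c s p := by
  obtain ⟨U, f, hinj, hfsup, hfcompl, hfc, hfs⟩ := h
  obtain ⟨ρ, hρ⟩ := exists_permHom_of_transposition_relations
    (fun i j => Function.Involutive.toPerm (p i j) (hpp i j))
    (fun i => Equiv.ext (hp0 i)) (fun i j => Equiv.ext (hpsymm i j))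
    (fun i j => Equiv.ext (hpp i j))
    (fun i j k hij hik hjk => Equiv.ext fun x => hppp i j k x hij hik hjk)
  have hρswap : ∀ i j x, ρ (Equiv.swap i j) x = p i j x := fun i j x => by rw [hρ]; rfl
  have hρmul : ∀ σ τ x, ρ (σ * τ) x = ρ σ (ρ τ x) := fun σ τ x => by rw [map_mul]; rfl
  have hρone : ∀ x, ρ 1 x = x := fun x => by rw [map_one]; rfl
  have hρsup : ∀ σ x y, ρ σ (x ⊔ y) = ρ σ x ⊔ ρ σ y := by
    intro σ x y
    induction σ using Equiv.Perm.swap_induction_on with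
    | one => simp only [hρone]
    | swap_mul σ i j _ ih => simp only [hρmul, hρswap, ih, hpsup]
  have hρcompl : ∀ σ x, ρ σ xᶜ = (ρ σ x)ᶜ := by
    intro σ x
    induction σ using Equiv.Perm.swap_induction_on with
    | one => simp only [hρone]
    | swap_mul σ i j _ ih => simp only [hρmul, hρswap, ih, hpcompl]
  have hcyl : ∀ (σ : Equiv.Perm (Fin n)) m x, (∃ m' y, ρ σ (c m x) = c m' y) ∧
      ∀ w, w ∈ f (ρ σ (c m x)) ↔ w ∘ σ ∈ f (c m x) := by
    intro σ m x
    induction σ using Equiv.Perm.swap_induction_on with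
    | one => exact ⟨⟨m, x, hρone _⟩, fun w => by rw [hρone]; rfl⟩
    | swap_mul σ i j _ ih =>
      obtain ⟨⟨m', y, hy⟩, ih⟩ := ih
      have := transposition_of_cylinder hp0 hpsymm hsc hcs hpp hppp hps hfc hfs i j m' y
      rw [← hy] at this
      simp only [hρmul, hρswap]
      exact ⟨this.1, fun w => (this.2 w).trans (ih _)⟩
  have hdeg : ∀ (σ : Equiv.Perm (Fin n)) w, ¬ Function.Injective w → ∀ x,
      w ∈ f (ρ σ x) ↔ w ∘ σ ∈ f x := by
    intro σ w hw
    refine mem_iff_of_cylinder_agree hn hc hcs hfsup hfcompl hfc hfs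
      (F := fun x => w ∈ f (ρ σ x)) ?_ ?_ ?_ (fun m x => (hcyl σ m x).2 w)
    · intro x y
      rw [hρsup, hfsup]; rfl
    · intro x
      rw [hρcompl, hfcompl]; rfl
    · rwa [Function.Injective.of_comp_iff' w σ.bijective]
  obtain ⟨r, hr, hrperm, hrwit⟩ := exists_orbit_representative (n := n) (U := U)
  let g : A → Set (Fin n → WitnessTree n U) := fun x =>
    {t | ∃ σ : Equiv.Perm (Fin n), t = r t ∘ σ ∧ label ∘ r t ∈ f (ρ σ x)}
  have hlabel : ∀ t : Fin n → WitnessTree n U, ¬ Function.Injective t →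
      ¬ Function.Injective (label ∘ t) := fun t ht h => ht h.of_comp
  have hg : ∀ (t : Fin n → WitnessTree n U) (σ : Equiv.Perm (Fin n)), t = r t ∘ σ → ∀ x,
      t ∈ g x ↔ label ∘ r t ∈ f (ρ σ x) := by
    intro t σ hσ x
    refine ⟨?_, fun h => ⟨σ, hσ, h⟩⟩
    rintro ⟨τ, hτ, h⟩
    by_cases hi : Function.Injective (r t)
    · have : σ = τ := Equiv.ext fun k => hi (congrFun (hσ.symm.trans hτ) k)
      rwa [this]
    · rw [hdeg _ _ (hlabel _ hi), Function.comp_assoc] at h ⊢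
      rwa [← hσ, hτ]
  have hgdeg : ∀ t : Fin n → WitnessTree n U, ¬ Function.Injective t → ∀ x,
      t ∈ g x ↔ label ∘ t ∈ f x := by
    intro t ht x
    obtain ⟨σ, hσ⟩ := hr t
    have hi : ¬ Function.Injective (r t) := fun h => ht (by
      rw [hσ]; exact h.comp σ.injective)
    rw [hg t σ hσ, hdeg _ _ (hlabel _ hi), Function.comp_assoc, ← hσ]
  have hgwit : ∀ t : Fin n → WitnessTree n U, Witnessed t → ∀ x,
      t ∈ g x ↔ label ∘ t ∈ f x := by
    intro t ht x
    rw [hg t 1 (by rw [hrwit t ht]; rfl), hρone, hrwit t ht]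
  have hgcyl : ∀ (t : Fin n → WitnessTree n U) m x, t ∈ g (c m x) ↔ label ∘ t ∈ f (c m x) := by
    intro t m x
    obtain ⟨σ, hσ⟩ := hr t
    rw [hg t σ hσ, (hcyl σ m x).2, Function.comp_assoc, ← hσ]
  have hgsup : ∀ x y, g (x ⊔ y) = g x ⊔ g y := by
    intro x y
    ext t
    obtain ⟨σ, hσ⟩ := hr t
    change _ ↔ t ∈ g x ∨ t ∈ g y
    simp only [hg t σ hσ, hρsup, hfsup]
    rfl
  refine ⟨WitnessTree n U, g, ?_, hgsup, ?_, ?_, ?_, ?_⟩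
  · intro x y hxy
    refine hinj (Set.ext fun w => ?_)
    let i : Fin n := ⟨0, by omega⟩
    let t : Fin n → WitnessTree n U := base ∘ w
    have ht := hgwit (Function.update t i (witness t i (w i))) ⟨i, t, w i, rfl⟩
    have hw : label ∘ Function.update t i (witness t i (w i)) = w := by
      rw [label_comp_update_witness]
      exact Function.update_eq_self i w
    rw [hw] at ht
    rw [← ht, ← ht, hxy]
  · intro x
    ext t
    obtain ⟨σ, hσ⟩ := hr t
    rw [Set.mem_compl_iff, hg t σ hσ, hg t σ hσ, hρcompl, hfcompl]
    rfl
  · intro i x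
    ext t
    constructor
    · intro ht
      rw [hgcyl, hfc] at ht
      obtain ⟨u, hu⟩ := ht
      refine ⟨witness t i u, ?_⟩
      rw [hgwit _ ⟨i, t, u, rfl⟩, label_comp_update_witness]
      exact hu
    · rintro ⟨v, hv⟩
      have : Function.update t i v ∈ g (c i x) := by
        rw [← sup_eq_right.mpr (hc i x), hgsup]
        exact Or.inl hv
      rw [hgcyl, hfc] at this ⊢
      refine (mem_cyl_congr fun k hk => ?_).1 this
      simp [hk]
  · intro i j x
    ext t
    rcases eq_or_ne i j with rfl | hij
    · simp [hs0, subst]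
    have hni : ¬ Function.Injective (Function.update t i (t j)) := fun h =>
      hij (h (by rw [Function.update_self, Function.update_of_ne hij.symm]))
    change _ ↔ Function.update t i (t j) ∈ g x
    rw [hgdeg _ hni, ← hcs i j x hij, hgcyl, hcs i j x hij, hfs, Function.comp_update]
    rfl
  · intro i j x
    ext t
    obtain ⟨σ, hσ⟩ := hr t
    have hσ' : t ∘ Equiv.swap i j = r (t ∘ Equiv.swap i j) ∘ (σ * Equiv.swap i j) := by
      rw [hrperm, Equiv.Perm.coe_mul, ← Function.comp_assoc, ← hσ]
    rw [mem_transp, hg t σ hσ, hg _ _ hσ', hrperm, hρmul, hρswap]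

/-- Theorem: a csp-algebra embeds into a full csp-set algebra iff it satisfies the
`FPA_n` axioms and its cs-reduct embeds into a full cs-set algebra. -/
theorem stmt6 {n : ℕ} (hn : 3 ≤ n) {A : Type} [BooleanAlgebra A]
    (c : Fin n → A → A) (s : Fin n → Fin n → A → A) (p : Fin n → Fin n → A → A) :
    RepCspSet c s p ↔
      ((∀ (i : Fin n) (x : A), s i i x = x) ∧
       (∀ (i : Fin n) (x : A), p i i x = x) ∧
       (∀ (i j : Fin n) (x : A), p i j x = p j i x) ∧
       (∀ (i : Fin n) (x : A), x ≤ c i x) ∧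
       (∀ (i : Fin n) (x y : A), c i (x ⊔ y) = c i x ⊔ c i y) ∧
       (∀ (i j : Fin n) (x : A), s i j (c i x) = c i x) ∧
       (∀ (i j : Fin n) (x : A), i ≠ j → c i (s i j x) = s i j x) ∧
       (∀ (i j k : Fin n) (x : A), k ≠ i → k ≠ j → s i j (c k x) = c k (s i j x)) ∧
       (∀ (i j : Fin n) (x y : A), s i j (x ⊔ y) = s i j x ⊔ s i j y) ∧
       (∀ (i j : Fin n) (x : A), s i j xᶜ = (s i j x)ᶜ) ∧
       (∀ (i j : Fin n) (x y : A), p i j (x ⊔ y) = p i j x ⊔ p i j y) ∧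
       (∀ (i j : Fin n) (x : A), p i j xᶜ = (p i j x)ᶜ) ∧
       (∀ (i j : Fin n) (x : A), p i j (p i j x) = x) ∧
       (∀ (i j k : Fin n) (x : A), i ≠ j → i ≠ k → j ≠ k →
          p i j (p i k x) = p j k (p i j x)) ∧
       (∀ (i j : Fin n) (x : A), p i j (s j i x) = s i j x) ∧
       RepCsSet c s) := by
  constructor
  · rintro ⟨V, f, hinj, hsup, hcompl, hc, hs, hp⟩
    have hle : ∀ x y, f x ≤ f y → x ≤ y := by
      intro x y h
      rw [← sup_eq_right]
      exact hinj (by rw [hsup, sup_eq_right.mpr h])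
    refine ⟨?_, ?_, ?_, ?_, ?_, ?_, ?_, ?_, ?_, ?_, ?_, ?_, ?_, ?_, ?_,
      V, f, hinj, hsup, hcompl, hc, hs⟩
    · exact fun i x => hinj (by ext w; simp [hs, subst])
    · exact fun i x => hinj (by ext w; simp [hp, transp])
    · exact fun i j x => hinj (by ext w; rw [hp, hp, mem_transp, mem_transp, Equiv.swap_comm])
    · refine fun i x => hle _ _ fun w hw => ?_
      rw [hc]
      exact ⟨w i, by rwa [Function.update_eq_self]⟩
    · refine fun i x y => hinj ?_
      ext w
      simp [hc, hsup, cyl, exists_or]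
    · refine fun i j x => hinj ?_
      ext w
      rw [hs, hc]
      exact mem_cyl_congr fun k hk => by simp [hk]
    · refine fun i j x hij => hinj ?_
      ext w
      have : Nonempty V := ⟨w i⟩
      simp [hs, hc, cyl, subst, hij.symm]
    · refine fun i j k x hki hkj => hinj ?_
      ext w
      simp only [hs, hc, cyl, subst, Set.mem_ofPred_eq, Function.update_of_ne hkj.symm,
        Function.update_comm hki]
    · exact fun i j x y => hinj (by simp only [hs, hsup]; rfl)
    · exact fun i j x => hinj (by simp only [hs, hcompl]; rfl)
    · exact fun i j x y => hinj (by simp only [hp, hsup]; rfl)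
    · exact fun i j x => hinj (by simp only [hp, hcompl]; rfl)
    · refine fun i j x => hinj ?_
      ext w
      simp only [hp, mem_transp, Function.comp_assoc, ← Equiv.Perm.coe_mul, Equiv.swap_mul_self]
      rfl
    · refine fun i j k x hij hik hjk => hinj ?_
      ext w
      simp only [hp, mem_transp, Function.comp_assoc, ← Equiv.Perm.coe_mul]
      have := Equiv.mul_swap_eq_swap_mul (Equiv.swap i j) i k
      rw [Equiv.swap_apply_left, Equiv.swap_apply_of_ne_of_ne hik.symm hjk.symm] at this
      rw [this]
    · refine fun i j x => hinj ?_
      ext w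
      rw [hp, mem_transp, hs, hs]
      change Function.update _ _ _ ∈ f x ↔ Function.update _ _ _ ∈ f x
      have : Function.update (w ∘ Equiv.swap i j) j ((w ∘ Equiv.swap i j) i) =
          Function.update w i (w j) := by
        funext k
        simp only [Function.update_apply, Function.comp_apply, Equiv.swap_apply_def]
        split_ifs <;> simp_all
      rw [this]
  · rintro ⟨hs0, hp0, hpsymm, hc, -, hsc, hcs, -, -, -, hpsup, hpcompl, hpp, hppp, hps, h⟩
    exact repCspSet_of_repCsSet hn hs0 hp0 hpsymm hc hsc hcs hpsup hpcompl hpp hppp hps h
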